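/- arXiv:1105.5970 — 8 statements merged into one kernel-verified Lean document; each statement's English description precedes it below -/
import Mathlib

section
/- Let (X, 𝒜) be a measurable space and φ a probability measure on X. For a bounded measurable function F : X → ℝ let μ_F denote the probability measure with density e^F / ∫ e^F dφ with respect to φ. Then for any two bounded measurable functions F, G : X → ℝ, the total variation distance satisfies ‖μ_F − μ_G‖_TV ≤ (exp(osc(F − G)) − 1)/2, where osc(H) = sup_{x,y∈X} (H(x) − H(y)). -/
open MeasureTheory Real

/-- The probability measure with density `e^F / ∫ e^F dφ` with respect to `φ`. -/
noncomputable def gibbsTilt {X : Type*} [MeasurableSpace X] (φ : Measure X) (F : X → ℝ) :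
    Measure X :=
  φ.withDensity (fun x => ENNReal.ofReal (Real.exp (F x) / ∫ y, Real.exp (F y) ∂φ))

/-- The oscillation of a real-valued function: `sup_{x,y} (H x - H y)`. -/
noncomputable def osc {X : Type*} (H : X → ℝ) : ℝ :=
  sSup {r : ℝ | ∃ x y, r = H x - H y}

theorem exp_integrable_of_bdd {X : Type*} [MeasurableSpace X] (φ : Measure X)
    [IsProbabilityMeasure φ] (F : X → ℝ) (hF : Measurable F) (C : ℝ) (hb : ∀ x, |F x| ≤ C) :
    Integrable (fun x => Real.exp (F x)) φ := by
  refine Integrable.of_bound (C := Real.exp C) (by fun_prop) (Filter.Eventually.of_forall ?_)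
  intro x
  rw [Real.norm_eq_abs, abs_of_pos (Real.exp_pos _)]
  exact Real.exp_le_exp.2 ((le_abs_self _).trans (hb x))

theorem gibbsTilt_prob {X : Type*} [MeasurableSpace X] (φ : Measure X)
    [IsProbabilityMeasure φ] (F : X → ℝ) (hF : Integrable (fun x => Real.exp (F x)) φ) :
    IsProbabilityMeasure (gibbsTilt φ F) :=
  isProbabilityMeasure_tilted hF

theorem gibbsTilt_le {X : Type*} [MeasurableSpace X] (φ : Measure X)
    [IsProbabilityMeasure φ] (F G : X → ℝ) (hF : Integrable (fun x => Real.exp (F x)) φ)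
    (hG : Integrable (fun x => Real.exp (G x)) φ) (D : ℝ)
    (hD : ∀ x y, (F x - G x) - (F y - G y) ≤ D) (A : Set X) (hA : MeasurableSet A) :
    (gibbsTilt φ F).real A ≤ Real.exp D * (gibbsTilt φ G).real A := by
  have pF := gibbsTilt_prob φ F hF
  have pG := gibbsTilt_prob φ G hG
  have zF : 0 < ∫ y, Real.exp (F y) ∂φ := integral_exp_pos hF
  have zG : 0 < ∫ y, Real.exp (G y) ∂φ := integral_exp_pos hG
  have key : gibbsTilt φ F A ≤ ENNReal.ofReal (Real.exp D) * gibbsTilt φ G A := by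
    unfold gibbsTilt
    rw [withDensity_apply _ hA, withDensity_apply _ hA,
      ← lintegral_const_mul' _ _ ENNReal.ofReal_ne_top]
    refine lintegral_mono fun x => ?_
    rw [← ENNReal.ofReal_mul (Real.exp_pos _).le]
    refine ENNReal.ofReal_le_ofReal ?_
    rw [← mul_div_assoc, div_le_div_iff₀ zF zG, ← integral_const_mul, ← integral_const_mul]
    refine integral_mono (hG.const_mul _) (hF.const_mul _) fun y => ?_
    simp only [← Real.exp_add]
    exact Real.exp_le_exp.2 (by linarith [hD x y])
  have := ENNReal.toReal_mono (ENNReal.mul_ne_top ENNReal.ofReal_ne_top (measure_ne_top _ _)) key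
  rwa [ENNReal.toReal_mul, ENNReal.toReal_ofReal (Real.exp_pos _).le] at this

theorem gibbsTilt_sub_le {X : Type*} [MeasurableSpace X] (φ : Measure X)
    [IsProbabilityMeasure φ] (F G : X → ℝ) (hF : Integrable (fun x => Real.exp (F x)) φ)
    (hG : Integrable (fun x => Real.exp (G x)) φ) (D : ℝ) (hD0 : 0 ≤ D)
    (hD : ∀ x y, (F x - G x) - (F y - G y) ≤ D) (A : Set X) (hA : MeasurableSet A) :
    (gibbsTilt φ F).real A - (gibbsTilt φ G).real A ≤ (Real.exp D - 1) / 2 := by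
  have pF := gibbsTilt_prob φ F hF
  have pG := gibbsTilt_prob φ G hG
  have h1 := gibbsTilt_le φ F G hF hG D hD A hA
  have h2 := gibbsTilt_le φ G F hG hF D (fun x y => by linarith [hD y x]) Aᶜ hA.compl
  rw [probReal_compl_eq_one_sub hA, probReal_compl_eq_one_sub hA] at h2
  have he := Real.one_le_exp hD0
  by_cases hc : (gibbsTilt φ F).real A ≤ (gibbsTilt φ G).real A
  · linarith
  · nlinarith

theorem tv_bound_of_tilted_densities
    {X : Type*} [MeasurableSpace X] (φ : Measure X) [IsProbabilityMeasure φ]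
    (F G : X → ℝ) (hFmeas : Measurable F) (hGmeas : Measurable G)
    (CF CG : ℝ) (hFbd : ∀ x, |F x| ≤ CF) (hGbd : ∀ x, |G x| ≤ CG) :
    ∀ A : Set X, MeasurableSet A →
      |((gibbsTilt φ F) A).toReal - ((gibbsTilt φ G) A).toReal| ≤
        (Real.exp (osc (fun x => F x - G x)) - 1) / 2 := by
  intro A hA
  have hF := exp_integrable_of_bdd φ F hFmeas CF hFbd
  have hG := exp_integrable_of_bdd φ G hGmeas CG hGbd
  have hD : ∀ x y, (F x - G x) - (F y - G y) ≤ osc (fun x => F x - G x) := by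
    intro x y
    refine le_csSup ⟨2 * (CF + CG), ?_⟩ ⟨x, y, rfl⟩
    rintro r ⟨x, y, rfl⟩
    have h1 := abs_le.1 (hFbd x)
    have h2 := abs_le.1 (hFbd y)
    have h3 := abs_le.1 (hGbd x)
    have h4 := abs_le.1 (hGbd y)
    simp only
    linarith [h1.1, h1.2, h2.1, h2.2, h3.1, h3.2, h4.1, h4.2]
  have hne : Nonempty X := nonempty_of_isProbabilityMeasure φ
  obtain ⟨x0⟩ := hne
  have hD0 : 0 ≤ osc (fun x => F x - G x) := by simpa using hD x0 x0
  refine abs_le.2 ⟨?_, gibbsTilt_sub_le φ F G hF hG _ hD0 hD A hA⟩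
  have := gibbsTilt_sub_le φ G F hG hF _ hD0 (fun x y => by linarith [hD y x]) A hA
  simp only [Measure.real] at this
  linarith
end

section
/- Let S and X be measurable spaces, κ a Markov kernel from S to X (a measurable family s ↦ κ_s of probability measures on X), and γ ∈ [0,1] such that |κ_s(A) − κ_{s'}(A)| ≤ γ for all s, s' ∈ S and all measurable A ⊆ X. Let μ, ν be probability measures on S and δ ≥ 0 be such that |μ(B) − ν(B)| ≤ δ for every measurable B ⊆ S. Then for every measurable A ⊆ X, |∫ κ_s(A) dμ(s) − ∫ κ_s(A) dν(s)| ≤ γ·δ. -/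
open MeasureTheory ProbabilityTheory

theorem kernel_integral_tv_contraction
    {S X : Type*} [MeasurableSpace S] [MeasurableSpace X]
    (κ : Kernel S X) [IsMarkovKernel κ]
    (γ : ℝ) (hγ0 : 0 ≤ γ) (hγ1 : γ ≤ 1)
    (hκ : ∀ s s' : S, ∀ A : Set X, MeasurableSet A →
      |(κ s A).toReal - (κ s' A).toReal| ≤ γ)
    (μ ν : Measure S) [IsProbabilityMeasure μ] [IsProbabilityMeasure ν]
    (δ : ℝ) (hδ : 0 ≤ δ)
    (hμν : ∀ B : Set S, MeasurableSet B → |(μ B).toReal - (ν B).toReal| ≤ δ) :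
    ∀ A : Set X, MeasurableSet A →
      |(∫ s, (κ s A).toReal ∂μ) - ∫ s, (κ s A).toReal ∂ν| ≤ γ * δ := by
  intro A hA
  set f : S → ℝ := fun s => (κ s A).toReal with hf
  have hfm : Measurable f := (κ.measurable_coe hA).ennreal_toReal
  have hf0 : ∀ s, 0 ≤ f s := fun s => ENNReal.toReal_nonneg
  have hbdd : BddBelow (Set.range f) := ⟨0, by rintro _ ⟨s, rfl⟩; exact hf0 s⟩
  haveI : Nonempty S := nonempty_of_isProbabilityMeasure μ
  set m : ℝ := ⨅ s, f s with hm
  have hg0 : ∀ s, 0 ≤ f s - m := fun s => sub_nonneg.2 (ciInf_le hbdd s)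
  have hg1 : ∀ s, f s - m ≤ γ := by
    intro s
    have : f s - γ ≤ m := le_ciInf fun s' => by
      have := (abs_le.1 (hκ s s' A hA)).2
      simp only [hf]
      linarith
    linarith
  have hgm : Measurable fun s => f s - m := hfm.sub_const m
  have key : ∀ (ρ : Measure S) [IsProbabilityMeasure ρ],
      (∫ s, f s ∂ρ = m + ∫ t in Set.Ioc 0 γ, ρ.real {a | t ≤ f a - m}) ∧
      IntegrableOn (fun t => ρ.real {a | t ≤ f a - m}) (Set.Ioc 0 γ) := by
    intro ρ _
    have hgi : Integrable (fun s => f s - m) ρ :=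
      Integrable.of_bound hgm.aestronglyMeasurable γ
        (Filter.Eventually.of_forall fun s => by
          rw [Real.norm_eq_abs, abs_of_nonneg (hg0 s)]; exact hg1 s)
    constructor
    · rw [← hgi.integral_eq_integral_Ioc_meas_le (Filter.Eventually.of_forall hg0)
        (Filter.Eventually.of_forall hg1)]
      have hfi : Integrable f ρ := by
        have := hgi.add (integrable_const m)
        refine this.congr (Filter.Eventually.of_forall fun s => by simp)
      rw [integral_sub hfi (integrable_const m)]
      simp
    · have hanti : Antitone fun t => ρ.real {a | t ≤ f a - m} := by
        intro a b hab
        exact measureReal_mono (fun x hx => le_trans hab hx)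
      exact ((hanti.antitoneOn (Set.Icc 0 γ)).integrableOn_isCompact isCompact_Icc).mono_set
        Set.Ioc_subset_Icc_self
  obtain ⟨h1, h2⟩ := key μ
  obtain ⟨h3, h4⟩ := key ν
  rw [h1, h3, add_sub_add_left_eq_sub, ← integral_sub h2 h4, ← Real.norm_eq_abs]
  have h := norm_setIntegral_le_of_norm_le_const (μ := volume) (s := Set.Ioc 0 γ) (C := δ)
    (f := fun t => μ.real {a | t ≤ f a - m} - ν.real {a | t ≤ f a - m}) (by simp)
    (fun t _ => by
      rw [Real.norm_eq_abs]
      exact hμν _ (measurableSet_le measurable_const hgm))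
  refine h.trans (le_of_eq ?_)
  simp [hγ0, mul_comm]
end

section
/- Let X be a measurable space equipped with a partial order, μ a probability measure on X, and f, g : X → ℝ nonnegative measurable functions with ∫ f dμ = ∫ g dμ = 1. Assume g is monotone and g > 0 μ-almost everywhere, that g·log g, f·log f and f·log g are μ-integrable, and assume the stochastic domination property: for every monotone measurable h : X → ℝ which is integrable with respect to both the measures g·μ and f·μ, one has ∫ h g dμ ≤ ∫ h f dμ. Then ∫ g log g dμ ≤ ∫ f log f dμ. -/
open MeasureTheory

lemma trunc_bound (a : ℝ) (ha : 0 < a) (n : ℕ) :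
    |Real.log (max a (1 / ((n : ℝ) + 1)))| ≤ |Real.log a| := by
  have hn : (0 : ℝ) < 1 / ((n : ℝ) + 1) := by positivity
  rcases le_total (1 / ((n : ℝ) + 1)) a with h | h
  · rw [max_eq_left h]
  · rw [max_eq_right h]
    have h1 : 1 / ((n : ℝ) + 1) ≤ 1 := by
      rw [div_le_one (by positivity)]
      have : (0 : ℝ) ≤ n := Nat.cast_nonneg n
      linarith
    have h2 : Real.log (1 / ((n : ℝ) + 1)) ≤ 0 := Real.log_nonpos hn.le h1
    have h3 := Real.log_le_log ha h
    rw [abs_of_nonpos h2, abs_of_nonpos (h3.trans h2)]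
    linarith

lemma trunc_conv {X : Type*} [MeasurableSpace X] (μ : Measure X)
    (k g : X → ℝ) (hk : Measurable k) (hg : Measurable g)
    (hgpos : ∀ᵐ x ∂μ, 0 < g x)
    (hkg : Integrable (fun x => k x * Real.log (g x)) μ) :
    (∀ n : ℕ, Integrable (fun x => Real.log (max (g x) (1 / ((n : ℝ) + 1))) * k x) μ) ∧
    Filter.Tendsto (fun n : ℕ => ∫ x, Real.log (max (g x) (1 / ((n : ℝ) + 1))) * k x ∂μ)
      Filter.atTop (nhds (∫ x, k x * Real.log (g x) ∂μ)) := by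
  have hm : ∀ n : ℕ, Measurable (fun x => Real.log (max (g x) (1 / ((n : ℝ) + 1))) * k x) := by
    intro n
    exact (Real.measurable_log.comp (hg.max measurable_const)).mul hk
  have hb : ∀ n : ℕ, ∀ᵐ x ∂μ, ‖Real.log (max (g x) (1 / ((n : ℝ) + 1))) * k x‖ ≤
      ‖k x * Real.log (g x)‖ := by
    intro n
    filter_upwards [hgpos] with x hx
    rw [norm_mul, norm_mul, mul_comm]
    exact mul_le_mul_of_nonneg_left (trunc_bound _ hx n) (norm_nonneg _)
  refine ⟨fun n => hkg.mono (hm n).aestronglyMeasurable (hb n), ?_⟩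
  refine tendsto_integral_of_dominated_convergence _
    (fun n => (hm n).aestronglyMeasurable) hkg.norm hb ?_
  filter_upwards [hgpos] with x hx
  refine tendsto_const_nhds.congr' ?_
  have ht := tendsto_one_div_add_atTop_nhds_zero_nat (𝕜 := ℝ)
  filter_upwards [ht.eventually (gt_mem_nhds hx)] with n hn
  rw [max_eq_left hn.le, mul_comm]

theorem entropy_censoring
    {X : Type*} [MeasurableSpace X] [PartialOrder X]
    (μ : Measure X) [IsProbabilityMeasure μ]
    (f g : X → ℝ) (hf : Measurable f) (hg : Measurable g)
    (hf0 : ∀ x, 0 ≤ f x) (hg0 : ∀ x, 0 ≤ g x)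
    (hf1 : ∫ x, f x ∂μ = 1) (hg1 : ∫ x, g x ∂μ = 1)
    (hgmono : Monotone g)
    (hgpos : ∀ᵐ x ∂μ, 0 < g x)
    (hgg : Integrable (fun x => g x * Real.log (g x)) μ)
    (hff : Integrable (fun x => f x * Real.log (f x)) μ)
    (hfg : Integrable (fun x => f x * Real.log (g x)) μ)
    (hdom : ∀ h : X → ℝ, Measurable h → Monotone h →
      Integrable (fun x => h x * g x) μ → Integrable (fun x => h x * f x) μ →
      ∫ x, h x * g x ∂μ ≤ ∫ x, h x * f x ∂μ) :
    ∫ x, g x * Real.log (g x) ∂μ ≤ ∫ x, f x * Real.log (f x) ∂μ := by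
  have hfi : Integrable f μ := by
    by_contra h
    rw [integral_undef h] at hf1
    exact zero_ne_one hf1
  have hgi : Integrable g μ := by
    by_contra h
    rw [integral_undef h] at hg1
    exact zero_ne_one hg1
  obtain ⟨ig, tg⟩ := trunc_conv μ g g hg hg hgpos hgg
  obtain ⟨jf, tf⟩ := trunc_conv μ f g hf hg hgpos hfg
  have h1 : ∫ x, g x * Real.log (g x) ∂μ ≤ ∫ x, f x * Real.log (g x) ∂μ := by
    refine le_of_tendsto_of_tendsto' tg tf fun n => ?_
    refine hdom (fun x => Real.log (max (g x) (1 / ((n : ℝ) + 1))))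
      (Real.measurable_log.comp (hg.max measurable_const)) ?_ (ig n) (jf n)
    intro x y hxy
    have hn : (0 : ℝ) < 1 / ((n : ℝ) + 1) := by positivity
    exact Real.log_le_log (lt_max_of_lt_right hn) (max_le_max_right _ (hgmono hxy))
  have h2 : ∫ x, (f x * Real.log (g x) + (f x - g x)) ∂μ ≤ ∫ x, f x * Real.log (f x) ∂μ := by
    refine integral_mono_ae (hfg.add (hfi.sub hgi)) hff ?_
    filter_upwards [hgpos] with x hx
    rcases (hf0 x).eq_or_lt with h | h
    · simp only [← h, zero_mul]
      linarith
    · have h3 := Real.log_le_sub_one_of_pos (div_pos hx h)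
      rw [Real.log_div hx.ne' h.ne'] at h3
      have h4 := mul_le_mul_of_nonneg_left h3 h.le
      have h5 : f x * (g x / f x - 1) = g x - f x := by field_simp
      rw [h5] at h4
      linarith
  have h6 : ∫ x, (f x * Real.log (g x) + (f x - g x)) ∂μ = ∫ x, f x * Real.log (g x) ∂μ := by
    have hs : Integrable (fun x => f x - g x) μ := hfi.sub hgi
    rw [integral_add hfg hs, integral_sub hfi hgi, hf1, hg1]
    ring
  linarith
end

section
/- Let X be a measurable space equipped with a partial order, μ a probability measure on X, and f, g : X → ℝ nonnegative integrable functions with ∫ f dμ = ∫ g dμ = 1. Assume g is monotone, and assume that for every bounded monotone measurable h : X → ℝ one has ∫ h g dμ ≤ ∫ h f dμ. Then ∫ |g − 1| dμ ≤ ∫ |f − 1| dμ; equivalently, ‖g·μ − μ‖_TV ≤ ‖f·μ − μ‖_TV. -/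
open MeasureTheory

theorem tv_censoring
    {X : Type*} [MeasurableSpace X] [PartialOrder X]
    (μ : Measure X) [IsProbabilityMeasure μ]
    (f g : X → ℝ) (hf : Measurable f) (hg : Measurable g)
    (hf0 : ∀ x, 0 ≤ f x) (hg0 : ∀ x, 0 ≤ g x)
    (hfint : Integrable f μ) (hgint : Integrable g μ)
    (hf1 : ∫ x, f x ∂μ = 1) (hg1 : ∫ x, g x ∂μ = 1)
    (hgmono : Monotone g)
    (hdom : ∀ h : X → ℝ, Measurable h → Monotone h → (∃ C : ℝ, ∀ x, |h x| ≤ C) →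
      ∫ x, h x * g x ∂μ ≤ ∫ x, h x * f x ∂μ) :
    ∫ x, |g x - 1| ∂μ ≤ ∫ x, |f x - 1| ∂μ := by
  classical
  let h : X → ℝ := fun x => if 1 ≤ g x then 1 else -1
  have hm : Measurable h :=
    Measurable.ite (measurableSet_le measurable_const hg) measurable_const measurable_const
  have hb : ∀ x, |h x| ≤ 1 := by
    intro x
    by_cases hx : 1 ≤ g x <;> simp [h, hx]
  have hmono : Monotone h := by
    intro x y hxy
    have := hgmono hxy
    simp only [h]
    split_ifs <;> linarith
  have key := hdom h hm hmono ⟨1, hb⟩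
  have hmul : ∀ u : X → ℝ, Integrable u μ → Integrable (fun x => h x * u x) μ := fun u hu =>
    hu.bdd_mul (c := 1) hm.aestronglyMeasurable (Filter.Eventually.of_forall hb)
  have hh : Integrable h μ := by
    simpa using hmul (fun _ => 1) (integrable_const 1)
  have e1 : ∫ x, |g x - 1| ∂μ = ∫ x, (h x * g x - h x) ∂μ := by
    congr 1
    ext x
    by_cases hx : 1 ≤ g x
    · simp [h, hx]
    · simp only [h, hx, if_false]
      rw [abs_of_neg (by linarith)]
      ring
  have e2 : ∫ x, (h x * f x - h x) ∂μ ≤ ∫ x, |f x - 1| ∂μ := by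
    apply integral_mono ((hmul f hfint).sub hh) (hfint.sub (integrable_const 1)).abs
    intro x
    have h1 := le_abs_self (f x - 1)
    have h2 := neg_abs_le (f x - 1)
    simp only [h, Pi.sub_apply]
    split_ifs <;> linarith
  rw [integral_sub (hmul f hfint) hh] at e2
  rw [e1, integral_sub (hmul g hgint) hh]
  linarith
end

section
/- Let X and Y be measurable spaces each equipped with a partial order, μ a probability measure on X, and x ↦ κ_x a measurable family of probability measures on Y such that every κ_x satisfies the FKG inequality: for all bounded monotone measurable u, v : Y → ℝ, ∫ u v dκ_x ≥ (∫ u dκ_x)(∫ v dκ_x). Let w : X × Y → ℝ be a bounded nonnegative measurable function which is monotone for the product order, with ∫_X ∫_Y w(x,y) dκ_x(y) dμ(x) = 1. Then for every bounded measurable F : X × Y → ℝ which is monotone for the product order, ∫_X (∫_Y F(x,y′) dκ_x(y′)) · (∫_Y w(x,y) dκ_x(y)) dμ(x) ≤ ∫_X ∫_Y F(x,y) w(x,y) dκ_x(y) dμ(x). -/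
open MeasureTheory ProbabilityTheory

theorem kernel_integral_aux {X Y : Type*} [MeasurableSpace X] [MeasurableSpace Y]
    (κ : Kernel X Y) [IsMarkovKernel κ]
    (G : X × Y → ℝ) (hG : Measurable G) (C : ℝ) (hC : ∀ p, |G p| ≤ C) :
    StronglyMeasurable (fun x => ∫ y, G (x, y) ∂κ x) ∧ ∀ x, |∫ y, G (x, y) ∂κ x| ≤ C := by
  refine ⟨hG.stronglyMeasurable.integral_kernel_prod_right', fun x => ?_⟩
  have h := norm_integral_le_of_norm_le_const (μ := κ x) (f := fun y => G (x, y)) (C := C)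
    (Filter.Eventually.of_forall fun y => hC (x, y))
  simpa using h

theorem resampling_stochastically_decreases
    {X Y : Type*} [MeasurableSpace X] [MeasurableSpace Y]
    [PartialOrder X] [PartialOrder Y]
    (μ : Measure X) [IsProbabilityMeasure μ]
    (κ : Kernel X Y) [IsMarkovKernel κ]
    (hFKG : ∀ x : X, ∀ u v : Y → ℝ,
      Measurable u → Measurable v → Monotone u → Monotone v →
      (∃ C : ℝ, ∀ y, |u y| ≤ C) → (∃ C : ℝ, ∀ y, |v y| ≤ C) →
      (∫ y, u y ∂κ x) * (∫ y, v y ∂κ x) ≤ ∫ y, u y * v y ∂κ x)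
    (w : X × Y → ℝ) (hw : Measurable w) (hw0 : ∀ p, 0 ≤ w p)
    (hwbd : ∃ C : ℝ, ∀ p, |w p| ≤ C)
    (hwmono : Monotone w)
    (hw1 : ∫ x, ∫ y, w (x, y) ∂κ x ∂μ = 1) :
    ∀ F : X × Y → ℝ, Measurable F → (∃ C : ℝ, ∀ p, |F p| ≤ C) → Monotone F →
      ∫ x, (∫ y', F (x, y') ∂κ x) * (∫ y, w (x, y) ∂κ x) ∂μ ≤
        ∫ x, ∫ y, F (x, y) * w (x, y) ∂κ x ∂μ := by
  intro F hF ⟨C, hC⟩ hFm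
  obtain ⟨D, hD⟩ := hwbd
  have hFw : ∀ p, |F p * w p| ≤ C * D := fun p => by
    rw [abs_mul]
    exact mul_le_mul (hC p) (hD p) (abs_nonneg _) ((abs_nonneg _).trans (hC p))
  obtain ⟨m1, b1⟩ := kernel_integral_aux κ F hF C hC
  obtain ⟨m2, b2⟩ := kernel_integral_aux κ w hw D hD
  obtain ⟨m3, b3⟩ := kernel_integral_aux κ (fun p => F p * w p) (hF.mul hw) (C * D) hFw
  refine integral_mono ?_ ?_ ?_
  · refine Integrable.of_bound (m1.mul m2).aestronglyMeasurable (C * D)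
      (Filter.Eventually.of_forall fun x => ?_)
    rw [Real.norm_eq_abs, abs_mul]
    exact mul_le_mul (b1 x) (b2 x) (abs_nonneg _) ((abs_nonneg _).trans (b1 x))
  · exact Integrable.of_bound m3.aestronglyMeasurable (C * D)
      (Filter.Eventually.of_forall b3)
  · intro x
    exact hFKG x (fun y => F (x, y)) (fun y => w (x, y))
      (hF.comp measurable_prodMk_left) (hw.comp measurable_prodMk_left)
      (fun a b hab => hFm (Prod.mk_le_mk.2 ⟨le_rfl, hab⟩))
      (fun a b hab => hwmono (Prod.mk_le_mk.2 ⟨le_rfl, hab⟩))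
      ⟨C, fun y => hC _⟩ ⟨D, fun y => hD _⟩
end

section
/- Let X and Y be measurable spaces each equipped with a partial order, and x ↦ κ_x a measurable family of probability measures on Y which is monotone in the sense that x ≤ x′ implies ∫ u dκ_x ≤ ∫ u dκ_{x′} for every bounded monotone measurable u : Y → ℝ. Let w : X × Y → ℝ be a bounded measurable function, monotone for the product order. Then the function x ↦ ∫_Y w(x,y) dκ_x(y) is monotone on X. -/
open MeasureTheory ProbabilityTheory

theorem monotone_integral_of_monotone_kernel
    {X Y : Type*} [MeasurableSpace X] [MeasurableSpace Y]
    [PartialOrder X] [PartialOrder Y]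
    (κ : Kernel X Y) [IsMarkovKernel κ]
    (hκmono : ∀ x x' : X, x ≤ x' → ∀ u : Y → ℝ,
      Measurable u → Monotone u → (∃ C : ℝ, ∀ y, |u y| ≤ C) →
      ∫ y, u y ∂κ x ≤ ∫ y, u y ∂κ x')
    (w : X × Y → ℝ) (hw : Measurable w) (hwbd : ∃ C : ℝ, ∀ p, |w p| ≤ C)
    (hwmono : Monotone w) :
    Monotone (fun x => ∫ y, w (x, y) ∂κ x) := by
  obtain ⟨C, hC⟩ := hwbd
  have hm : ∀ x, Measurable (fun y => w (x, y)) := fun x => hw.comp measurable_prodMk_left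
  have hint : ∀ x x', Integrable (fun y => w (x, y)) (κ x') := fun x x' =>
    Integrable.of_bound (hm x).aestronglyMeasurable C
      (Filter.Eventually.of_forall fun y => hC (x, y))
  intro x x' hx
  calc ∫ y, w (x, y) ∂κ x ≤ ∫ y, w (x', y) ∂κ x :=
        integral_mono (hint x x) (hint x' x) fun y => hwmono ⟨hx, le_refl y⟩
    _ ≤ ∫ y, w (x', y) ∂κ x' :=
        hκmono x x' hx (fun y => w (x', y)) (hm x')
          (fun y y' hy => hwmono ⟨le_refl x', hy⟩) ⟨C, fun y => hC (x', y)⟩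
end

section
/- Let ν be a probability measure on a measurable space X, K : X × X → ℝ a bounded measurable function with ∫ K(x,y) dν(y) = 1 for every x ∈ X, and g : X → ℝ a bounded measurable function. Define T g(x) = ∫ K(x,y) g(y) dν(y). Then Var_ν(T g) ≤ (1/2) · Var_ν(g) · ∫∫∫ (K(x₁,y) − K(x₂,y))² dν(x₁) dν(x₂) dν(y). -/
open MeasureTheory ProbabilityTheory

/-- Bounded measurable functions are integrable for a finite measure. -/
lemma vck_int {X : Type*} [MeasurableSpace X] (ν : Measure X) [IsProbabilityMeasure ν]
    {f : X → ℝ} (hf : Measurable f) (C : ℝ) (hC : ∀ x, |f x| ≤ C) : Integrable f ν :=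
  Integrable.of_bound hf.aestronglyMeasurable C (Filter.Eventually.of_forall hC)

/-- Cauchy–Schwarz. -/
lemma vck_cs {X : Type*} [MeasurableSpace X] (ν : Measure X)
    {f h : X → ℝ} (hff : Integrable (fun x => f x ^ 2) ν) (hhh : Integrable (fun x => h x ^ 2) ν)
    (hfh : Integrable (fun x => f x * h x) ν) :
    (∫ x, f x * h x ∂ν) ^ 2 ≤ (∫ x, h x ^ 2 ∂ν) * ∫ x, f x ^ 2 ∂ν := by
  have key : ∀ t : ℝ, 0 ≤ (∫ x, f x ^ 2 ∂ν) * (t * t) + (2 * ∫ x, f x * h x ∂ν) * t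
      + ∫ x, h x ^ 2 ∂ν := by
    intro t
    have h0 : 0 ≤ ∫ x, (t * f x + h x) ^ 2 ∂ν := integral_nonneg fun x => sq_nonneg _
    have h1 : ∫ x, (t * f x + h x) ^ 2 ∂ν
        = ∫ x, ((t * t) * f x ^ 2 + (2 * t) * (f x * h x)) + h x ^ 2 ∂ν := by
      congr 1; ext x; ring
    rw [h1, integral_add ((hff.const_mul _).fun_add (hfh.const_mul _)) hhh,
      integral_add (hff.const_mul _) (hfh.const_mul _), integral_const_mul,
      integral_const_mul] at h0
    linarith
  have := discrim_le_zero key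
  unfold discrim at this
  linarith

/-- Variance as a double integral. -/
lemma vck_var {X : Type*} [MeasurableSpace X] (ν : Measure X) [IsProbabilityMeasure ν]
    {u : X → ℝ} (hu : Measurable u) (C : ℝ) (hC : ∀ x, |u x| ≤ C) :
    variance u ν = (1 / 2) * ∫ x₁, ∫ x₂, (u x₁ - u x₂) ^ 2 ∂ν ∂ν := by
  have hi := vck_int ν hu C hC
  have h2 : Integrable (fun x => u x ^ 2) ν := vck_int ν (hu.pow_const 2) (C ^ 2) fun x => by
    rw [abs_pow]; exact pow_le_pow_left₀ (abs_nonneg _) (hC x) 2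
  have hin : ∀ a : ℝ, ∫ x, (a - u x) ^ 2 ∂ν
      = (a ^ 2 - (2 * ∫ x, u x ∂ν) * a) + ∫ x, u x ^ 2 ∂ν := by
    intro a
    have : ∫ x, (a - u x) ^ 2 ∂ν = ∫ x, (a ^ 2 - (2 * a) * u x) + u x ^ 2 ∂ν := by
      congr 1; ext x; ring
    rw [this, integral_add ((integrable_const _).sub' (hi.const_mul _)) h2,
      integral_sub (integrable_const _) (hi.const_mul _), integral_const_mul]
    simp
    ring
  simp_rw [hin]
  rw [integral_add (h2.sub' (hi.const_mul _)) (integrable_const _),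
      integral_sub h2 (hi.const_mul _), integral_const_mul]
  have hL : MemLp u 2 ν := (memLp_two_iff_integrable_sq hu.aestronglyMeasurable).2 h2
  rw [variance_eq_sub hL]
  simp
  ring

theorem variance_contraction_of_kernel
    {X : Type*} [MeasurableSpace X]
    (ν : Measure X) [IsProbabilityMeasure ν]
    (K : X × X → ℝ) (hK : Measurable K) (hKbd : ∃ C : ℝ, ∀ p, |K p| ≤ C)
    (hK1 : ∀ x : X, ∫ y, K (x, y) ∂ν = 1)
    (g : X → ℝ) (hg : Measurable g) (hgbd : ∃ C : ℝ, ∀ x, |g x| ≤ C) :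
    variance (fun x => ∫ y, K (x, y) * g y ∂ν) ν ≤
      (1 / 2) * variance g ν *
        ∫ x₁, ∫ x₂, ∫ y, (K (x₁, y) - K (x₂, y)) ^ 2 ∂ν ∂ν ∂ν := by
  obtain ⟨C, hC⟩ := hKbd
  obtain ⟨D, hD⟩ := hgbd
  have bound : ∀ {f : X → ℝ} {B : ℝ}, (∀ x, |f x| ≤ B) → |∫ x, f x ∂ν| ≤ B := by
    intro f B hB
    have := norm_integral_le_of_norm_le_const (μ := ν) (f := f) (C := B)
      (Filter.Eventually.of_forall hB)
    simpa using this
  set u : X → ℝ := fun x => ∫ y, K (x, y) * g y ∂ν with hu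
  have hum : Measurable u := by
    have : StronglyMeasurable (fun p : X × X => K p * g p.2) :=
      (hK.mul (hg.comp measurable_snd)).stronglyMeasurable
    exact this.integral_prod_right'.measurable
  have hKg : ∀ x y, |K (x, y) * g y| ≤ C * D := fun x y => by
    rw [abs_mul]
    exact mul_le_mul (hC _) (hD _) (abs_nonneg _) ((abs_nonneg _).trans (hC (x, y)))
  have hub : ∀ x, |u x| ≤ C * D := fun x => bound (hKg x)
  have hKx : ∀ x, Measurable fun y => K (x, y) := fun x => hK.comp measurable_prodMk_left
  set m := ∫ y, g y ∂ν with hm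
  have hvar : variance g ν = ∫ y, (g y - m) ^ 2 ∂ν := variance_eq_integral hg.aemeasurable
  have hdb : ∀ x₁ x₂ y, |K (x₁, y) - K (x₂, y)| ≤ C + C := fun x₁ x₂ y =>
    (abs_sub _ _).trans (add_le_add (hC _) (hC _))
  have hd2b : ∀ x₁ x₂ y, |(K (x₁, y) - K (x₂, y)) ^ 2| ≤ (C + C) ^ 2 := fun x₁ x₂ y => by
    rw [abs_pow]; exact pow_le_pow_left₀ (abs_nonneg _) (hdb _ _ _) 2
  have hgb : ∀ y, |g y - m| ≤ D + D := fun y =>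
    (abs_sub _ _).trans (add_le_add (hD _) (bound hD))
  have hpt : ∀ x₁ x₂, (u x₁ - u x₂) ^ 2
      ≤ variance g ν * ∫ y, (K (x₁, y) - K (x₂, y)) ^ 2 ∂ν := by
    intro x₁ x₂
    have hKi := fun x => vck_int ν (hKx x) C fun y => hC (x, y)
    have hKgi : ∀ x, Integrable (fun y => K (x, y) * g y) ν := fun x => vck_int ν ((hKx x).mul hg) (C * D) (hKg x)
    have e : u x₁ - u x₂ = ∫ y, (K (x₁, y) - K (x₂, y)) * (g y - m) ∂ν := by
      have : ∫ y, (K (x₁, y) - K (x₂, y)) * (g y - m) ∂ν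
          = ∫ y, (K (x₁, y) * g y - K (x₂, y) * g y) - m * (K (x₁, y) - K (x₂, y)) ∂ν := by
        congr 1; ext y; ring
      rw [this, integral_sub ((hKgi x₁).sub' (hKgi x₂)) (((hKi x₁).sub' (hKi x₂)).const_mul m),
        integral_sub (hKgi x₁) (hKgi x₂), integral_const_mul, integral_sub (hKi x₁) (hKi x₂),
        hK1, hK1]
      simp [hu]
    rw [e, hvar]
    have hdm : Measurable fun y => K (x₁, y) - K (x₂, y) := (hKx x₁).sub (hKx x₂)
    have hgm : Measurable fun y => g y - m := hg.sub_const m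
    refine vck_cs ν (vck_int ν (hdm.pow_const 2) _ (hd2b x₁ x₂))
      (vck_int ν (hgm.pow_const 2) ((D + D) ^ 2) fun y => ?_)
      (vck_int ν (hdm.mul hgm) ((C + C) * (D + D)) fun y => ?_)
    · rw [abs_pow]; exact pow_le_pow_left₀ (abs_nonneg _) (hgb _) 2
    · rw [abs_mul]
      exact mul_le_mul (hdb _ _ _) (hgb _) (abs_nonneg _) ((abs_nonneg _).trans (hdb x₁ x₂ y))
  -- measurability of the inner integrals
  have hFm : Measurable fun p : X × X => ∫ y, (K (p.1, y) - K (p.2, y)) ^ 2 ∂ν := by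
    have : StronglyMeasurable (fun q : (X × X) × X => (K (q.1.1, q.2) - K (q.1.2, q.2)) ^ 2) :=
      Measurable.stronglyMeasurable (by fun_prop)
    exact this.integral_prod_right'.measurable
  have hUm : Measurable fun p : X × X => (u p.1 - u p.2) ^ 2 := by fun_prop
  have hUb : ∀ x₁ x₂, |(u x₁ - u x₂) ^ 2| ≤ (C * D + C * D) ^ 2 := fun x₁ x₂ => by
    rw [abs_pow]
    exact pow_le_pow_left₀ (abs_nonneg _)
      ((abs_sub _ _).trans (add_le_add (hub _) (hub _))) 2
  have hFb : ∀ x₁ x₂, |∫ y, (K (x₁, y) - K (x₂, y)) ^ 2 ∂ν| ≤ (C + C) ^ 2 :=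
    fun x₁ x₂ => bound (hd2b x₁ x₂)
  rw [vck_var ν hum _ hub, mul_assoc]
  refine mul_le_mul_of_nonneg_left ?_ (by norm_num)
  rw [← integral_const_mul]
  refine integral_mono
    (vck_int ν hUm.stronglyMeasurable.integral_prod_right'.measurable _ fun x => bound (hUb x))
    ((vck_int ν hFm.stronglyMeasurable.integral_prod_right'.measurable _
      fun x => bound (hFb x)).const_mul _) fun x₁ => ?_
  simp only
  rw [← integral_const_mul]
  exact integral_mono (vck_int ν (hUm.comp measurable_prodMk_left) _ (hUb x₁))
    ((vck_int ν (hFm.comp measurable_prodMk_left) _ (hFb x₁)).const_mul _) fun x₂ => hpt x₁ x₂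
end

section
/- Let X be a measurable space equipped with a partial order such that the set {(x,y) ∈ X × X : y ≤ x} and the diagonal {(x,x) : x ∈ X} are measurable in X × X. Let μ, ν be probability measures on X with μ ≠ ν, let ρ⁺ and ρ⁻ be the Jordan decomposition parts of the signed measure μ − ν, and set m = ρ⁺(X) (so also m = ρ⁻(X) > 0). Suppose φ is a probability measure on X × X whose first marginal is ρ⁺/m, whose second marginal is ρ⁻/m, and which satisfies φ({(x,y) : y ≤ x}) = 1. Then there exists a probability measure Ψ on X × X whose first marginal is μ, whose second marginal is ν, such that Ψ({(x,y) : y ≤ x}) = 1 and Ψ({(x,y) : x ≠ y}) = m. -/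
open MeasureTheory

theorem monotone_optimal_coupling_of_jordan_coupling
    {X : Type*} [MeasurableSpace X] [PartialOrder X]
    (hle : MeasurableSet {p : X × X | p.2 ≤ p.1})
    (hdiag : MeasurableSet {p : X × X | p.1 = p.2})
    (μ ν : Measure X) [IsProbabilityMeasure μ] [IsProbabilityMeasure ν]
    (hne : μ ≠ ν)
    (ρplus ρminus : Measure X)
    (hplus : ρplus = (μ.toSignedMeasure - ν.toSignedMeasure).toJordanDecomposition.posPart)
    (hminus : ρminus = (μ.toSignedMeasure - ν.toSignedMeasure).toJordanDecomposition.negPart)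
    (m : ENNReal) (hm : m = ρplus Set.univ)
    (φ : Measure (X × X)) [IsProbabilityMeasure φ]
    (hfst : φ.map Prod.fst = m⁻¹ • ρplus)
    (hsnd : φ.map Prod.snd = m⁻¹ • ρminus)
    (hφmono : φ {p : X × X | p.2 ≤ p.1} = 1) :
    ∃ Ψ : Measure (X × X), IsProbabilityMeasure Ψ ∧
      Ψ.map Prod.fst = μ ∧ Ψ.map Prod.snd = ν ∧
      Ψ {p : X × X | p.2 ≤ p.1} = 1 ∧
      Ψ {p : X × X | p.1 ≠ p.2} = m := by
  have hsing := (μ.toSignedMeasure - ν.toSignedMeasure).toJordanDecomposition.mutuallySingular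
  rw [← hplus, ← hminus] at hsing
  rw [Measure.toJordanDecomposition_toSignedMeasure_sub] at hplus hminus
  change ρplus = μ - ν at hplus
  change ρminus = ν - μ at hminus
  have hple : ρplus ≤ μ := hplus ▸ Measure.sub_le
  haveI : IsFiniteMeasure ρplus := isFiniteMeasure_of_le μ hple
  have hbal : μ + ρminus = ν + ρplus := by
    have h := Measure.sub_toSignedMeasure_eq_toSignedMeasure_sub (μ := μ) (ν := ν)
    rw [sub_eq_sub_iff_add_eq_add] at h
    rw [hplus, hminus]
    have h2 : (μ + (ν - μ)).toSignedMeasure = (ν + (μ - ν)).toSignedMeasure := by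
      rw [Measure.toSignedMeasure_add, Measure.toSignedMeasure_add, h, add_comm]
    exact Measure.toSignedMeasure_eq_toSignedMeasure_iff.1 h2
  obtain ⟨κ, hκ⟩ : ∃ κ, κ = μ - ρplus := ⟨_, rfl⟩
  have hκμ : κ + ρplus = μ := by rw [hκ]; exact Measure.sub_add_cancel_of_le hple
  have hκν : κ + ρminus = ν := by
    ext s hs
    have h1 := congrArg (fun η : Measure X => η s) hbal
    have h2 := congrArg (fun η : Measure X => η s) hκμ
    simp only [Measure.add_apply] at h1 h2 ⊢
    rw [← h2, add_right_comm] at h1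
    exact (ENNReal.add_left_inj (measure_ne_top ρplus s)).1 h1
  have hmtop : m ≠ ⊤ := hm ▸ measure_ne_top ρplus _
  have hm0 : m ≠ 0 := by
    intro h0
    have h : ρplus = 0 := Measure.measure_univ_eq_zero.1 (hm ▸ h0)
    rw [h, smul_zero] at hfst
    have h3 : φ.map Prod.fst Set.univ = 0 := by rw [hfst]; rfl
    rw [Measure.map_apply measurable_fst MeasurableSet.univ] at h3
    simp at h3
  have hd : Measurable (fun x : X => (x, x)) := measurable_id.prodMk measurable_id
  have hF : (m • φ + κ.map (fun x => (x, x))).map Prod.fst = μ := by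
    rw [Measure.map_add _ _ measurable_fst, Measure.map_smul, hfst, smul_smul,
      ENNReal.mul_inv_cancel hm0 hmtop, one_smul, Measure.map_map measurable_fst hd]
    change ρplus + κ.map id = μ
    rw [Measure.map_id, add_comm, hκμ]
  have hS : (m • φ + κ.map (fun x => (x, x))).map Prod.snd = ν := by
    rw [Measure.map_add _ _ measurable_snd, Measure.map_smul, hsnd, smul_smul,
      ENNReal.mul_inv_cancel hm0 hmtop, one_smul, Measure.map_map measurable_snd hd]
    change ρminus + κ.map id = ν
    rw [Measure.map_id, add_comm, hκν]
  have hP : IsProbabilityMeasure (m • φ + κ.map (fun x => (x, x))) := by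
    constructor
    have h := measure_univ (μ := μ)
    rw [← hF, Measure.map_apply measurable_fst MeasurableSet.univ] at h
    simpa using h
  refine ⟨_, hP, hF, hS, ?_, ?_⟩
  · rw [← prob_compl_eq_zero_iff hle, Measure.add_apply, Measure.smul_apply,
      (prob_compl_eq_zero_iff hle).2 hφmono, Measure.map_apply hd hle.compl]
    simp
  · have hφd : φ {p : X × X | p.1 = p.2} = 0 := by
      obtain ⟨S, hSm, h1, h2⟩ := hsing
      have a1 : φ (Prod.fst ⁻¹' S) = 0 := by
        rw [← Measure.map_apply measurable_fst hSm, hfst]; simp [h1]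
      have a2 : φ (Prod.snd ⁻¹' Sᶜ) = 0 := by
        rw [← Measure.map_apply measurable_snd hSm.compl, hsnd, Measure.smul_apply, h2, smul_zero]
      refine measure_mono_null ?_ (measure_union_null a1 a2)
      rintro ⟨x, y⟩ (rfl : x = y)
      exact Set.mem_union _ _ _ |>.2 (em (x ∈ S))
    change (m • φ + κ.map (fun x => (x, x))) {p : X × X | p.1 = p.2}ᶜ = m
    rw [Measure.add_apply, Measure.smul_apply, (prob_compl_eq_one_iff hdiag).2 hφd,
      Measure.map_apply hd hdiag.compl]
    simp
end
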